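/- Let G be a group, let d ≥ 1, and let M be a module over the integral group ring ℤG. Suppose that P_{d+1} → P_d → ⋯ → P₁ → P₀ → M → 0 and Q_{d+1} → Q_d → ⋯ → Q₁ → Q₀ → M → 0 are two partial resolutions of M by finitely generated free ℤG-modules with chosen finite ℤG-bases (exact at P_i and Q_i for all 0 ≤ i ≤ d, with the maps to M surjective). Let FV_P, FV_Q : ℕ → ℕ ∪ {∞} be the filling functions FV_P(k) = sup{‖x‖_{∂,P} : x ∈ ker(P_d → P_{d−1}), ‖x‖_{P_d} ≤ k} and similarly for FV_Q, where ‖x‖_{∂,P} = min{‖y‖_{P_{d+1}} : y ∈ P_{d+1}, y ↦ x} (for d = 1, ker(P_1 → P_0) is meant). Then there exists a constant C > 0 such that FV_P(n) ≤ C · FV_Q(Cn + C) + Cn + C and FV_Q(n) ≤ C · FV_P(Cn + C) + Cn + C for all n ∈ ℕ; that is, the growth rate class of the (d+1)-filling function FV_M^{d+1} depends only on M. -/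

import Mathlib

open Finsupp

/-- The ℓ1-norm on the free ℤG-module with basis `Fin m`, identified with the
permutation module on the free G-set `Fin m × G` (the chosen ℤG-basis being the
elements `(i, 1)`). -/
def l1 {α : Type*} (x : α →₀ ℤ) : ℕ := x.support.sum fun s => (x s).natAbs

/-- The action of `g : G` on the free ℤG-module `ℤ[Fin m × G]`, permuting the
basis by left multiplication on the second coordinate. -/
def gactF {G : Type*} [Group G] {m : ℕ} (g : G) (x : (Fin m × G) →₀ ℤ) :
    (Fin m × G) →₀ ℤ :=
  Finsupp.equivMapDomain (Equiv.prodCongr (Equiv.refl (Fin m)) (Equiv.mulLeft g)) x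

/-- The filling norm `‖x‖_∂ = min{‖y‖ : y ↦ x}` of `x` with respect to the map
`δ`, valued in `ℕ∞` (the infimum of the empty set being `∞`). -/
noncomputable def fillNorm {G : Type*} [Group G] {m m' : ℕ}
    (δ : ((Fin m' × G) →₀ ℤ) →+ ((Fin m × G) →₀ ℤ))
    (x : (Fin m × G) →₀ ℤ) : ℕ∞ :=
  ⨅ y : {y : (Fin m' × G) →₀ ℤ // δ y = x}, ((l1 (y : (Fin m' × G) →₀ ℤ) : ℕ∞))

/-- The filling function `FV(k) = sup{‖x‖_∂ : x ∈ ker δ, ‖x‖ ≤ k}`, where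
fillings are taken along `δtop`, valued in `ℕ∞` (the supremum of the empty set
being `0`). -/
noncomputable def FV {G : Type*} [Group G] {m m' m'' : ℕ}
    (δtop : ((Fin m'' × G) →₀ ℤ) →+ ((Fin m' × G) →₀ ℤ))
    (δ : ((Fin m' × G) →₀ ℤ) →+ ((Fin m × G) →₀ ℤ)) (k : ℕ) : ℕ∞ :=
  sSup {v : ℕ∞ | ∃ x : (Fin m' × G) →₀ ℤ, δ x = 0 ∧ l1 x ≤ k ∧ v = fillNorm δtop x}

/-!
Lift the identity of `M` to equivariant chain maps `f : P → Q` and `g : Q → P`, and choose an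
equivariant homotopy `h` from the identity of `P` to `g ∘ f`. If `x` is a `d`-cycle of `P` and `y`
fills `f x` in `Q`, then `g y - h x` fills `x`. Equivariant maps between finitely generated free
modules are ℓ1-bounded, so this filling has norm at most `B * ‖y‖ + D * ‖x‖`, while `f x` is a
cycle of norm at most `A * ‖x‖`.
-/

section L1Norm

variable {α β : Type*}

theorem l1_eq_sum_of_support_subset {x : α →₀ ℤ} {s : Finset α} (h : x.support ⊆ s) :
    l1 x = ∑ a ∈ s, (x a).natAbs :=
  Finset.sum_subset h fun a _ ha => by simpa using ha

theorem l1_add_le (x y : α →₀ ℤ) : l1 (x + y) ≤ l1 x + l1 y := by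
  classical
  rw [l1_eq_sum_of_support_subset Finsupp.support_add,
    l1_eq_sum_of_support_subset (Finset.subset_union_left (s₂ := y.support)),
    l1_eq_sum_of_support_subset (Finset.subset_union_right (s₁ := x.support)),
    ← Finset.sum_add_distrib]
  exact Finset.sum_le_sum fun a _ => Int.natAbs_add_le _ _

theorem l1_sub_le (x y : α →₀ ℤ) : l1 (x - y) ≤ l1 x + l1 y := by
  have l1_neg : l1 (-y) = l1 y := by simp [l1]
  simpa only [sub_eq_add_neg, l1_neg] using l1_add_le x (-y)

theorem l1_zsmul (c : ℤ) (x : α →₀ ℤ) : l1 (c • x) = c.natAbs * l1 x := by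
  rw [l1_eq_sum_of_support_subset Finsupp.support_smul, l1, Finset.mul_sum]
  exact Finset.sum_congr rfl fun a _ => Int.natAbs_mul c (x a)

theorem l1_map_le_mul {φ : (α →₀ ℤ) →+ (β →₀ ℤ)} {C : ℕ}
    (hφ : ∀ a, l1 (φ (single a 1)) ≤ C) (x : α →₀ ℤ) : l1 (φ x) ≤ C * l1 x :=
  calc l1 (φ x) = l1 (∑ a ∈ x.support, x a • φ (single a 1)) := by
        simp only [← map_zsmul, smul_single_one, ← map_sum]
        rw [← Finsupp.sum, sum_single]
    _ ≤ ∑ a ∈ x.support, l1 (x a • φ (single a 1)) :=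
        Finset.le_sum_of_subadditive l1 le_rfl l1_add_le _ _
    _ ≤ ∑ a ∈ x.support, C * (x a).natAbs := by
        gcongr with a
        rw [l1_zsmul, mul_comm]
        gcongr
        exact hφ a
    _ = C * l1 x := by rw [l1, Finset.mul_sum]

theorem l1_gactF {G : Type*} [Group G] {m : ℕ} (g : G) (x : (Fin m × G) →₀ ℤ) :
    l1 (gactF g x) = l1 x :=
  sum_equivMapDomain _ x fun _ c => c.natAbs

end L1Norm

/-- The free `ℤG`-module with basis `Fin m`, as the permutation module on `Fin m × G`; the basis
consists of the elements `single (i, 1) 1`. -/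
abbrev FreeMod (G : Type*) (m : ℕ) : Type _ := (Fin m × G) →₀ ℤ

/-- The `G`-module structure `gactF` on a free module, used to treat free modules and `M` alike.
It is only a local instance: if `G` acts on `ℤ`, then `Finsupp` already carries the pointwise
action. -/
abbrev FreeMod.distribMulAction {G : Type*} [Group G] {m : ℕ} :
    DistribMulAction G (FreeMod G m) where
  smul := gactF
  one_smul x := by
    ext ⟨i, k⟩
    change x (i, 1⁻¹ * k) = x (i, k)
    rw [inv_one, one_mul]
  mul_smul g h x := by
    ext ⟨i, k⟩
    change x (i, (g * h)⁻¹ * k) = x (i, h⁻¹ * (g⁻¹ * k))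
    rw [mul_inv_rev, mul_assoc]
  smul_zero _ := Finsupp.ext fun _ => rfl
  smul_add _ _ _ := Finsupp.ext fun _ => rfl

attribute [local instance] FreeMod.distribMulAction

section Equivariant

variable {G A B D : Type*} [Group G]
  [AddCommGroup A] [DistribMulAction G A] [AddCommGroup B] [DistribMulAction G B]
  [AddCommGroup D] [DistribMulAction G D]

theorem FreeMod.smul_single {m : ℕ} (g : G) (s : Fin m × G) (c : ℤ) :
    g • (single s c : FreeMod G m) = single (s.1, g * s.2) c :=
  equivMapDomain_single _ s c

variable (G) in
/-- An additive map of `G`-modules that commutes with `G`, that is, a `ℤG`-linear map. -/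
def IsEquivariant (φ : A →+ B) : Prop :=
  ∀ (g : G) (x : A), φ (g • x) = g • φ x

namespace IsEquivariant

theorem id : IsEquivariant G (AddMonoidHom.id A) := fun _ _ => rfl

theorem comp {ψ : B →+ D} {φ : A →+ B} (hψ : IsEquivariant G ψ) (hφ : IsEquivariant G φ) :
    IsEquivariant G (ψ.comp φ) := fun g x => by
  simp only [AddMonoidHom.comp_apply, hφ g x, hψ g]

theorem sub {φ ψ : A →+ B} (hφ : IsEquivariant G φ) (hψ : IsEquivariant G ψ) :
    IsEquivariant G (φ - ψ) := fun g x => by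
  simp only [AddMonoidHom.sub_apply, hφ g x, hψ g x, smul_sub]

theorem map_single {m : ℕ} {φ : FreeMod G m →+ A} (hφ : IsEquivariant G φ) (s : Fin m × G) :
    φ (single s 1) = s.2 • φ (single (s.1, 1) 1) := by
  rw [← hφ, FreeMod.smul_single, mul_one]

theorem ext_basis {m : ℕ} {φ ψ : FreeMod G m →+ A} (hφ : IsEquivariant G φ)
    (hψ : IsEquivariant G ψ) (h : ∀ i, φ (single (i, 1) 1) = ψ (single (i, 1) 1)) : φ = ψ := by
  refine Finsupp.addHom_ext' fun s => AddMonoidHom.ext_int ?_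
  simp only [AddMonoidHom.comp_apply, singleAddHom_apply, hφ.map_single s, hψ.map_single s, h]

theorem exists_l1_le_mul {m m' : ℕ} {φ : FreeMod G m →+ FreeMod G m'} (hφ : IsEquivariant G φ) :
    ∃ C : ℕ, ∀ x, l1 (φ x) ≤ C * l1 x := by
  refine ⟨∑ i, l1 (φ (single (i, 1) 1)), l1_map_le_mul fun s => ?_⟩
  calc l1 (φ (single s 1)) = l1 (φ (single (s.1, 1) 1)) := by
        rw [hφ.map_single]
        exact l1_gactF _ _
    _ ≤ ∑ i, l1 (φ (single (i, 1) 1)) :=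
        Finset.single_le_sum (f := fun i => l1 (φ (single (i, 1) 1)))
          (fun _ _ => Nat.zero_le _) (Finset.mem_univ s.1)

end IsEquivariant

theorem FreeMod.exists_isEquivariant_basis {m : ℕ} (y : Fin m → A) :
    ∃ φ : FreeMod G m →+ A, IsEquivariant G φ ∧ ∀ i, φ (single (i, 1) 1) = y i := by
  refine ⟨(linearCombination ℤ fun s : Fin m × G => s.2 • y s.1).toAddMonoidHom, fun g x => ?_,
    fun i => by simp⟩
  induction x using Finsupp.induction_linear with
  | zero => simp
  | add x x' hx hx' => rw [smul_add, map_add, hx, hx', map_add, smul_add]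
  | single s c => simp [FreeMod.smul_single, mul_smul, smul_comm g c]

theorem IsEquivariant.exists_lift {m : ℕ} {φ : FreeMod G m →+ A} {ψ : B →+ A}
    (hφ : IsEquivariant G φ) (hψ : IsEquivariant G ψ) (h : ∀ x, φ x ∈ ψ.range) :
    ∃ f : FreeMod G m →+ B, IsEquivariant G f ∧ ψ.comp f = φ := by
  choose y hy using fun i => h (single (i, 1) 1)
  obtain ⟨f, hf, hfy⟩ := FreeMod.exists_isEquivariant_basis (G := G) y
  exact ⟨f, hf, (hψ.comp hf).ext_basis hφ fun i => by rw [AddMonoidHom.comp_apply, hfy, hy]⟩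

end Equivariant

/-- A partial resolution `P_{n+1} → ⋯ → P_0 → M → 0` of the `G`-module `M` by finitely generated
free modules with chosen bases, where `P_i` has rank `rank i`. Ranks and differentials are indexed
by all of `ℕ`, but nothing is required of `d i` for `i > n`. -/
structure PartialResolution (G M : Type*) [Group G] [AddCommGroup M] [DistribMulAction G M]
    (n : ℕ) where
  rank : ℕ → ℕ
  d : ∀ i, FreeMod G (rank (i + 1)) →+ FreeMod G (rank i)
  ε : FreeMod G (rank 0) →+ M
  isEquivariant_d : ∀ i ≤ n, IsEquivariant G (d i)
  isEquivariant_ε : IsEquivariant G ε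
  surjective_ε : Function.Surjective ε
  exact_zero : Function.Exact (d 0) ε
  exact_succ : ∀ i < n, Function.Exact (d (i + 1)) (d i)

namespace PartialResolution

variable {G M : Type*} [Group G] [AddCommGroup M] [DistribMulAction G M] {n : ℕ}

/-- The `i`-cycles of a partial resolution, where the `0`-cycles are those of the augmented
complex: the kernel of `P_0 → M`. -/
noncomputable def cycles (P : PartialResolution G M n) : ∀ i, AddSubgroup (FreeMod G (P.rank i))
  | 0 => P.ε.ker
  | i + 1 => (P.d i).ker

theorem range_d (P : PartialResolution G M n) {i : ℕ} (hi : i ≤ n) :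
    (P.d i).range = P.cycles i := by
  ext x
  cases i with
  | zero => exact (P.exact_zero x).symm
  | succ i => exact (P.exact_succ i hi x).symm

theorem d_mem_cycles (P : PartialResolution G M n) {i : ℕ} (hi : i ≤ n)
    (x : FreeMod G (P.rank (i + 1))) : P.d i x ∈ P.cycles i :=
  P.range_d hi ▸ ⟨x, rfl⟩

/-- `IsComparison P Q i f` says that `f : P_i → Q_i` is the degree `i` component of an equivariant
chain map, defined in degrees at most `i`, that lifts the identity of `M`. The components in lower
degrees are recorded by the derivation instead of being part of the data. -/
inductive IsComparison (P Q : PartialResolution G M n) :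
    ∀ i, (FreeMod G (P.rank i) →+ FreeMod G (Q.rank i)) → Prop
  | zero {f} (hf : IsEquivariant G f) (h : Q.ε.comp f = P.ε) : IsComparison P Q 0 f
  | succ {i f f'} (hf : IsComparison P Q i f) (hf' : IsEquivariant G f')
      (h : (Q.d i).comp f' = f.comp (P.d i)) : IsComparison P Q (i + 1) f'

namespace IsComparison

variable {P Q R : PartialResolution G M n} {i : ℕ}

theorem isEquivariant {f : FreeMod G (P.rank i) →+ FreeMod G (Q.rank i)}
    (hf : IsComparison P Q i f) : IsEquivariant G f := by
  cases hf <;> assumption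

theorem map_mem_cycles {f : FreeMod G (P.rank i) →+ FreeMod G (Q.rank i)}
    (hf : IsComparison P Q i f) {x : FreeMod G (P.rank i)} (hx : x ∈ P.cycles i) :
    f x ∈ Q.cycles i := by
  cases hf with
  | zero _ h => exact (DFunLike.congr_fun h x).trans hx
  | @succ _ f _ _ _ h => exact (DFunLike.congr_fun h x).trans ((congrArg f hx).trans (map_zero f))

theorem exists_succ {f : FreeMod G (P.rank i) →+ FreeMod G (Q.rank i)}
    (hf : IsComparison P Q i f) (hi : i ≤ n) :
    ∃ f', IsComparison P Q (i + 1) f' ∧ (Q.d i).comp f' = f.comp (P.d i) := by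
  obtain ⟨f', hf', h⟩ := (hf.isEquivariant.comp (P.isEquivariant_d i hi)).exists_lift
    (Q.isEquivariant_d i hi) fun x => Q.range_d hi ▸ hf.map_mem_cycles (P.d_mem_cycles hi x)
  exact ⟨f', hf.succ hf' h, h⟩

variable (P i) in
protected theorem id : IsComparison P P i (AddMonoidHom.id _) := by
  induction i with
  | zero => exact .zero .id rfl
  | succ i ih => exact ih.succ .id rfl

theorem comp {g : FreeMod G (Q.rank i) →+ FreeMod G (R.rank i)}
    {f : FreeMod G (P.rank i) →+ FreeMod G (Q.rank i)}
    (hg : IsComparison Q R i g) (hf : IsComparison P Q i f) : IsComparison P R i (g.comp f) := by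
  induction hf with
  | zero hf h =>
    cases hg with
    | zero hg h' => exact .zero (hg.comp hf) (by rw [← AddMonoidHom.comp_assoc, h', h])
  | succ _ hf h ih =>
    cases hg with
    | succ hg₀ hg h' =>
      refine (ih hg₀).succ (hg.comp hf) ?_
      rw [← AddMonoidHom.comp_assoc, h', AddMonoidHom.comp_assoc, h, AddMonoidHom.comp_assoc]

-- On cycles the homotopy formula `d h + h d = u - v` loses its term `h d`, so the recursion
-- involves a single component `h` at a time.
theorem exists_homotopy {u v : FreeMod G (P.rank i) →+ FreeMod G (Q.rank i)}
    (hu : IsComparison P Q i u) (hv : IsComparison P Q i v) (hi : i ≤ n) :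
    ∃ h : FreeMod G (P.rank i) →+ FreeMod G (Q.rank (i + 1)),
      IsEquivariant G h ∧ ∀ z ∈ P.cycles i, Q.d i (h z) = u z - v z := by
  induction hu with
  | @zero u hu hεu =>
    cases hv with
    | zero hv hεv =>
      have sub_mem_cycles (x) : u x - v x ∈ Q.cycles 0 := by
        change Q.ε (u x - v x) = 0
        rw [map_sub, ← AddMonoidHom.comp_apply, hεu, ← AddMonoidHom.comp_apply, hεv, sub_self]
      obtain ⟨h, hh, hdh⟩ := (hu.sub hv).exists_lift (Q.isEquivariant_d 0 hi) fun x =>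
        Q.range_d hi ▸ sub_mem_cycles x
      exact ⟨h, hh, fun z _ => DFunLike.congr_fun hdh z⟩
  | @succ i u₀ u _ hu hdu ih =>
    cases hv with
    | @succ _ v₀ _ hv₀ hv hdv =>
      obtain ⟨h₀, hh₀, hdh₀⟩ := ih hv₀ (by omega)
      have sub_mem_cycles (x) : u x - v x - h₀ (P.d i x) ∈ Q.cycles (i + 1) := by
        change Q.d i (u x - v x - h₀ (P.d i x)) = 0
        have hdux : Q.d i (u x) = u₀ (P.d i x) := DFunLike.congr_fun hdu x
        have hdvx : Q.d i (v x) = v₀ (P.d i x) := DFunLike.congr_fun hdv x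
        rw [map_sub, map_sub, hdux, hdvx, hdh₀ _ (P.d_mem_cycles (by omega) x), sub_self]
      obtain ⟨h, hh, hdh⟩ :=
        ((hu.sub hv).sub (hh₀.comp (P.isEquivariant_d i (by omega)))).exists_lift
          (Q.isEquivariant_d (i + 1) hi) fun x => Q.range_d hi ▸ sub_mem_cycles x
      refine ⟨h, hh, fun z (hz : P.d i z = 0) => ?_⟩
      simpa [hz] using DFunLike.congr_fun hdh z

end IsComparison

theorem exists_isComparison (P Q : PartialResolution G M n) {i : ℕ} (hi : i ≤ n) :
    ∃ f, IsComparison P Q i f := by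
  induction i with
  | zero =>
    obtain ⟨f, hf, h⟩ := P.isEquivariant_ε.exists_lift Q.isEquivariant_ε fun x =>
      Q.surjective_ε (P.ε x)
    exact ⟨f, .zero hf h⟩
  | succ i ih =>
    obtain ⟨f, hf⟩ := ih (by omega)
    obtain ⟨f', hf', -⟩ := hf.exists_succ (by omega)
    exact ⟨f', hf'⟩

end PartialResolution

/-- The relation `F ≼ F'`: two monotone functions have the same growth rate class if it holds in
both directions. -/
def GrowthLE (F F' : ℕ → ℕ∞) : Prop :=
  ∃ C : ℕ, 0 < C ∧ ∀ k, F k ≤ C * F' (C * k + C) + ((C * k + C : ℕ) : ℕ∞)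

theorem GrowthLE.exists_common_const {F F' : ℕ → ℕ∞} (hF : Monotone F) (hF' : Monotone F')
    (h : GrowthLE F F') (h' : GrowthLE F' F) :
    ∃ C : ℕ, 0 < C ∧ ∀ k,
      F k ≤ C * F' (C * k + C) + ((C * k + C : ℕ) : ℕ∞) ∧
      F' k ≤ C * F (C * k + C) + ((C * k + C : ℕ) : ℕ∞) := by
  have enlarge {E : ℕ → ℕ∞} (hE : Monotone E) {C C' : ℕ} (hC : C ≤ C') (k : ℕ) :
      C * E (C * k + C) + ((C * k + C : ℕ) : ℕ∞) ≤
        C' * E (C' * k + C') + ((C' * k + C' : ℕ) : ℕ∞) := by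
    have : C * k + C ≤ C' * k + C' := by gcongr
    gcongr
    exact hE this
  obtain ⟨C, hC, hle⟩ := h
  obtain ⟨C', -, hle'⟩ := h'
  exact ⟨max C C', hC.trans_le (le_max_left _ _), fun k =>
    ⟨(hle k).trans (enlarge hF' (le_max_left _ _) k),
      (hle' k).trans (enlarge hF (le_max_right _ _) k)⟩⟩

section Filling

variable {G : Type*} [Group G] {p₀ p₁ p₂ q₀ q₁ q₂ : ℕ}

theorem FV_mono (δtop : FreeMod G p₂ →+ FreeMod G p₁) (δ : FreeMod G p₁ →+ FreeMod G p₀) :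
    Monotone (FV δtop δ) := fun _ _ hkl =>
  sSup_le_sSup fun _ ⟨x, hx, hxk, hv⟩ => ⟨x, hx, hxk.trans hkl, hv⟩

theorem fillNorm_le_of_forall_fill {δP : FreeMod G p₂ →+ FreeMod G p₁}
    {δQ : FreeMod G q₂ →+ FreeMod G q₁} {x : FreeMod G p₁} {w : FreeMod G q₁} {C D : ℕ}
    (hC : 0 < C) (h : ∀ y, δQ y = w → ∃ z, δP z = x ∧ l1 z ≤ C * l1 y + D) :
    fillNorm δP x ≤ C * fillNorm δQ w + D := by
  rw [fillNorm, fillNorm, ENat.mul_iInf_of_ne (by exact_mod_cast hC.ne'), ENat.iInf_add]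
  refine le_iInf fun ⟨y, hy⟩ => ?_
  obtain ⟨z, hz, hzy⟩ := h y hy
  exact (iInf_le _ ⟨z, hz⟩).trans (by exact_mod_cast hzy)

theorem growthLE_FV_of_homotopy {δP' : FreeMod G p₂ →+ FreeMod G p₁}
    {δP : FreeMod G p₁ →+ FreeMod G p₀} {δQ' : FreeMod G q₂ →+ FreeMod G q₁}
    {δQ : FreeMod G q₁ →+ FreeMod G q₀} {f : FreeMod G p₁ →+ FreeMod G q₁}
    {g : FreeMod G q₂ →+ FreeMod G p₂} {h : FreeMod G p₁ →+ FreeMod G p₂}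
    (hf : IsEquivariant G f) (hg : IsEquivariant G g) (hh : IsEquivariant G h)
    (hcycle : ∀ x, δP x = 0 → δQ (f x) = 0)
    (hfill : ∀ x, δP x = 0 → ∀ y, δQ' y = f x → δP' (g y - h x) = x) :
    GrowthLE (FV δP' δP) (FV δQ' δQ) := by
  obtain ⟨A, hA⟩ := hf.exists_l1_le_mul
  obtain ⟨B, hB⟩ := hg.exists_l1_le_mul
  obtain ⟨D, hD⟩ := hh.exists_l1_le_mul
  set C := A + B + D + 1
  refine ⟨C, by omega, fun k => sSup_le ?_⟩
  rintro _ ⟨x, hx, hxk, rfl⟩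
  have l1_filling_le (y) : l1 (g y - h x) ≤ C * l1 y + (C * k + C) :=
    calc l1 (g y - h x) ≤ B * l1 y + D * l1 x :=
          (l1_sub_le _ _).trans (Nat.add_le_add (hB y) (hD x))
      _ ≤ C * l1 y + C * k := by gcongr <;> omega
      _ ≤ C * l1 y + (C * k + C) := by omega
  have l1_image_le : l1 (f x) ≤ C * k + C :=
    calc l1 (f x) ≤ A * l1 x := hA x
      _ ≤ C * k := by gcongr; omega
      _ ≤ C * k + C := by omega
  calc fillNorm δP' x ≤ C * fillNorm δQ' (f x) + ((C * k + C : ℕ) : ℕ∞) :=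
        fillNorm_le_of_forall_fill (by omega) fun y hy =>
          ⟨g y - h x, hfill x hx y hy, l1_filling_le y⟩
    _ ≤ C * FV δQ' δQ (C * k + C) + ((C * k + C : ℕ) : ℕ∞) := by
        gcongr
        exact le_sSup ⟨f x, hcycle x hx, l1_image_le, rfl⟩

theorem PartialResolution.growthLE_FV {M : Type*} [AddCommGroup M] [DistribMulAction G M] {e : ℕ}
    (P Q : PartialResolution G M (e + 1)) :
    GrowthLE (FV (P.d (e + 1)) (P.d e)) (FV (Q.d (e + 1)) (Q.d e)) := by
  obtain ⟨f, hf⟩ := P.exists_isComparison Q le_rfl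
  obtain ⟨g, hg⟩ := Q.exists_isComparison P le_rfl
  obtain ⟨g', hg', hdg⟩ := hg.exists_succ le_rfl
  obtain ⟨h, hh, hdh⟩ := (hg.comp hf).exists_homotopy (.id P (e + 1)) le_rfl
  refine growthLE_FV_of_homotopy hf.isEquivariant hg'.isEquivariant hh
    (fun x hx => hf.map_mem_cycles hx) fun x hx y hy => ?_
  calc P.d (e + 1) (g' y - h x) = g (Q.d (e + 1) y) - (g (f x) - x) := by
        rw [map_sub, hdh x hx, ← AddMonoidHom.comp_apply, hdg]
        rfl
    _ = x := by rw [hy, sub_sub_cancel]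

end Filling

/-- The growth rate class of the (d+1)-dimensional filling function of a
ℤG-module `M` of type `FP_{d+1}` depends only on `M`: given two partial
resolutions `P_{d+1} → ⋯ → P_0 → M → 0` and `Q_{d+1} → ⋯ → Q_0 → M → 0` by
finitely generated free ℤG-modules with chosen finite bases (here `d = e + 1`,
so that `d ≥ 1`, and the free module with basis of cardinality `k i` is the
permutation module on `Fin (k i) × G`), the two filling functions are
equivalent. -/
theorem stmt_13 {G : Type*} [Group G] (e : ℕ)
    (M : Type*) [AddCommGroup M] [DistribMulAction G M]
    (kP kQ : ℕ → ℕ)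
    (δP : ∀ i : ℕ, ((Fin (kP (i + 1)) × G) →₀ ℤ) →+ ((Fin (kP i) × G) →₀ ℤ))
    (εP : ((Fin (kP 0) × G) →₀ ℤ) →+ M)
    (δQ : ∀ i : ℕ, ((Fin (kQ (i + 1)) × G) →₀ ℤ) →+ ((Fin (kQ i) × G) →₀ ℤ))
    (εQ : ((Fin (kQ 0) × G) →₀ ℤ) →+ M)
    -- the maps of the resolutions are G-equivariant
    (hδPequiv : ∀ i ≤ e + 1, ∀ (g : G) (x : (Fin (kP (i + 1)) × G) →₀ ℤ),
      δP i (gactF g x) = gactF g (δP i x))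
    (hεPequiv : ∀ (g : G) (x : (Fin (kP 0) × G) →₀ ℤ), εP (gactF g x) = g • εP x)
    (hδQequiv : ∀ i ≤ e + 1, ∀ (g : G) (x : (Fin (kQ (i + 1)) × G) →₀ ℤ),
      δQ i (gactF g x) = gactF g (δQ i x))
    (hεQequiv : ∀ (g : G) (x : (Fin (kQ 0) × G) →₀ ℤ), εQ (gactF g x) = g • εQ x)
    -- the maps to M are surjective
    (hεPsurj : Function.Surjective εP) (hεQsurj : Function.Surjective εQ)
    -- exactness at P₀ and at P_i for 1 ≤ i ≤ d = e + 1, and likewise for Q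
    (hP0 : ∀ x, εP x = 0 ↔ ∃ y, δP 0 y = x)
    (hPexact : ∀ i < e + 1, ∀ x, δP i x = 0 ↔ ∃ y, δP (i + 1) y = x)
    (hQ0 : ∀ x, εQ x = 0 ↔ ∃ y, δQ 0 y = x)
    (hQexact : ∀ i < e + 1, ∀ x, δQ i x = 0 ↔ ∃ y, δQ (i + 1) y = x) :
    ∃ C : ℕ, 0 < C ∧ ∀ n : ℕ,
      FV (δP (e + 1)) (δP e) n ≤
        (C : ℕ∞) * FV (δQ (e + 1)) (δQ e) (C * n + C) + ((C * n + C : ℕ) : ℕ∞) ∧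
      FV (δQ (e + 1)) (δQ e) n ≤
        (C : ℕ∞) * FV (δP (e + 1)) (δP e) (C * n + C) + ((C * n + C : ℕ) : ℕ∞) := by
  let P : PartialResolution G M (e + 1) :=
    ⟨kP, δP, εP, hδPequiv, hεPequiv, hεPsurj, hP0, hPexact⟩
  let Q : PartialResolution G M (e + 1) :=
    ⟨kQ, δQ, εQ, hδQequiv, hεQequiv, hεQsurj, hQ0, hQexact⟩
  exact (P.growthLE_FV Q).exists_common_const (FV_mono _ _) (FV_mono _ _) (Q.growthLE_FV P)
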